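/- arXiv:2512.06720 — 3 statements merged into one kernel-verified Lean document; each statement's English description precedes it below -/
import Mathlib

section
/- Let α > 0 and β > 0, and let z₁, z₂, z₃ : (0,∞) → [0,∞) be functions each tending to 0 as t → ∞. Suppose x : [0,∞) → [0,∞) is differentiable and y : [0,∞) → [0,∞) dominates x (i.e., x(t) ≤ y(t) for all t ≥ 0), and that the differential inequality x'(t) + α·x(t) + β·y(t) ≤ z₁(t) + z₂(t)·x(t) + z₃(t)·y(t) holds for all t > 0. Then x(t) → 0 as t → ∞. -/
/-!
Past some time `T`, the terms `z₂ x` and `z₃ y` are absorbed by `α x` and `β y` (as `z₂ ≤ α / 2`,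
`z₃ ≤ β` and `y ≥ 0`), which leaves `x' ≤ z₁ - (α / 2) x` with `z₁ < α ε / 4`. Hence
`t ↦ ε / 2 + x(T) exp (-(α / 2) (t - T))` is a barrier which `x` cannot cross (the fencing theorem
`image_le_of_deriv_right_lt_deriv_boundary`), and it tends to `ε / 2 < ε`.
-/

/-- Grönwall-type decay lemma: if `x` is nonnegative and differentiable on `[0,∞)`,
dominated by `y`, and satisfies `x' + α x + β y ≤ z₁ + z₂ x + z₃ y` with `zⱼ → 0`,
then `x → 0` as `t → ∞`. -/
theorem gronwall_decay (α β : ℝ) (hα : 0 < α) (hβ : 0 < β)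
    (z₁ z₂ z₃ : ℝ → ℝ)
    (hz_nonneg : ∀ t > (0:ℝ), 0 ≤ z₁ t ∧ 0 ≤ z₂ t ∧ 0 ≤ z₃ t)
    (hz₁ : Filter.Tendsto z₁ Filter.atTop (nhds 0))
    (hz₂ : Filter.Tendsto z₂ Filter.atTop (nhds 0))
    (hz₃ : Filter.Tendsto z₃ Filter.atTop (nhds 0))
    (x x' y : ℝ → ℝ)
    (hx_nonneg : ∀ t ≥ (0:ℝ), 0 ≤ x t)
    (hy_nonneg : ∀ t ≥ (0:ℝ), 0 ≤ y t)
    (hx_deriv : ∀ t ∈ Set.Ici (0:ℝ), HasDerivWithinAt x (x' t) (Set.Ici 0) t)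
    (hxy : ∀ t ≥ (0:ℝ), x t ≤ y t)
    (hineq : ∀ t > (0:ℝ), x' t + α * x t + β * y t ≤ z₁ t + z₂ t * x t + z₃ t * y t) :
    Filter.Tendsto x Filter.atTop (nhds 0) := by
  have hle : ∀ ε > 0, ∀ᶠ t in Filter.atTop, x t < ε := by
    intro ε hε
    obtain ⟨T, hT⟩ := Filter.eventually_atTop.1
      ((Filter.eventually_gt_atTop (0:ℝ)).and
        ((hz₁.eventually_lt_const (show (0:ℝ) < α * ε / 4 by positivity)).and
          ((hz₂.eventually_lt_const (show (0:ℝ) < α / 2 by positivity)).and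
            (hz₃.eventually_lt_const hβ))))
    have hT0 : 0 < T := (hT T le_rfl).1
    let B : ℝ → ℝ := fun t => ε / 2 + x T * Real.exp (-(α / 2) * (t - T))
    have hB : ∀ t, HasDerivAt B (x T * (Real.exp (-(α / 2) * (t - T)) * (-(α / 2)))) t := by
      intro t
      have h := ((((hasDerivAt_id t).sub_const T).const_mul (-(α / 2))).exp.const_mul
        (x T)).const_add (ε / 2)
      simpa [B] using h
    have hxB : ∀ t ≥ T, x t ≤ B t := by
      intro t ht
      refine image_le_of_deriv_right_lt_deriv_boundary (f := x) (f' := x') (a := T) (b := t)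
        ?_ ?_ ?_ hB ?_ ⟨ht, le_rfl⟩
      · intro s hs
        exact ((hx_deriv s (hT0.le.trans hs.1)).continuousWithinAt).mono
          fun u hu => hT0.le.trans hu.1
      · intro s hs
        exact (hx_deriv s (hT0.le.trans hs.1)).mono
          fun u hu => (hT0.le.trans hs.1).trans hu
      · simp only [B, sub_self, mul_zero, Real.exp_zero, mul_one]
        linarith
      · intro s hs heq
        obtain ⟨h0, h1, h2, h3⟩ := hT s hs.1
        have e2 := mul_le_mul_of_nonneg_right h2.le (hx_nonneg s h0.le)
        have e3 := mul_le_mul_of_nonneg_right h3.le (hy_nonneg s h0.le)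
        have e4 : α / 2 * x s
            = α * ε / 4 + α / 2 * (x T * Real.exp (-(α / 2) * (s - T))) := by
          rw [heq]; simp only [B]; ring
        linarith [hineq s h0]
    have hBlim : Filter.Tendsto B Filter.atTop (nhds (ε / 2)) := by
      have h1 : Filter.Tendsto (fun t : ℝ => -(α / 2) * (t - T)) Filter.atTop Filter.atBot :=
        (Filter.tendsto_atTop_add_const_right _ (-T) Filter.tendsto_id).const_mul_atTop_of_neg
          (by linarith)
      simpa [B] using ((Real.tendsto_exp_atBot.comp h1).const_mul (x T)).const_add (ε / 2)
    filter_upwards [Filter.eventually_ge_atTop T,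
      hBlim.eventually_lt_const (show ε / 2 < ε by linarith)] with t ht hBt
    exact (hxB t ht).trans_lt hBt
  refine tendsto_order.2 ⟨fun a ha => ?_, hle⟩
  filter_upwards [Filter.eventually_ge_atTop 0] with t ht
  exact ha.trans_le (hx_nonneg t ht)
end

section
/- Let x : [t₀, ∞) → ℝ be continuous, and let M' < M be real numbers with x(t₀) ≤ M'. Suppose that for every T ≥ t₀ the following implication holds: if x(t) ≤ M for all t ∈ [t₀, T], then x(T) ≤ M'. Then x(t) ≤ M' for all t ≥ t₀. -/
/-!
The set where `x ≤ M'` is closed, and it is open to the right as long as the bound has held so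
far: by continuity the strict inequality `x < M` persists for a short time, and the hypothesis
upgrades it to `x ≤ M'`. Continuous induction
(`IsClosed.Icc_subset_of_forall_mem_nhdsGT_of_Icc_subset`) then gives the bound on every `[t₀, b]`.
-/

/-- Continuous-induction/stopping-time argument: if `x` is continuous on `[t₀, ∞)` with
`x t₀ ≤ M' < M`, and whenever `x ≤ M` on `[t₀, T]` one in fact has `x T ≤ M'`, then
`x t ≤ M'` for all `t ≥ t₀`. -/
theorem continuous_induction_bound (t₀ M M' : ℝ) (x : ℝ → ℝ)
    (hx : ContinuousOn x (Set.Ici t₀)) (hMM : M' < M) (h0 : x t₀ ≤ M')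
    (h : ∀ T ≥ t₀, (∀ t ∈ Set.Icc t₀ T, x t ≤ M) → x T ≤ M') :
    ∀ t ≥ t₀, x t ≤ M' := by
  intro b hb
  -- Continuous induction on `[t₀, b]` for the closed set `{t | x t ≤ M'}`.
  have hclosed : IsClosed ({t | x t ≤ M'} ∩ Set.Icc t₀ b) := by
    have hxb : ContinuousOn x (Set.Icc t₀ b) := hx.mono Set.Icc_subset_Ici_self
    have := hxb.preimage_isClosed_of_isClosed isClosed_Icc (isClosed_Iic (a := M'))
    rwa [Set.inter_comm] at this
  refine hclosed.Icc_subset_of_forall_mem_nhdsGT_of_Icc_subset h0 ?_ ⟨hb, le_rfl⟩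
  intro t ht hsub
  have hxt : x t < M := lt_of_le_of_lt (hsub ⟨ht.1, le_rfl⟩) hMM
  -- Since `x t ≤ M' < M`, continuity keeps `x` below `M` slightly to the right of `t`,
  -- and there the hypothesis `h` improves the bound back to `M'`.
  have hev : ∀ᶠ s in nhdsWithin t (Set.Ioi t), x s < M :=
    ((hx t ht.1).mono fun s hs => ht.1.trans (le_of_lt hs)).eventually_lt_const hxt
  obtain ⟨u, hu, hlt⟩ := mem_nhdsGT_iff_exists_Ioo_subset.1 hev
  refine mem_nhdsGT_iff_exists_Ioo_subset.2 ⟨u, hu, fun T hT => ?_⟩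
  refine h T (ht.1.trans hT.1.le) fun r hr => ?_
  rcases le_or_gt r t with hrt | hrt
  · exact le_trans (hsub ⟨hr.1, hrt⟩) hMM.le
  · exact le_of_lt (hlt ⟨hrt, hr.2.trans_lt hT.2⟩)
end

section
/- Let ν > 0, 0 ≤ ε < 1, δ ≥ 0, and c ≥ 0. Let a : [0,∞) → [0,∞) be continuous with ∫_s^t a(r) dr ≤ δ + ε·ν·(t - s) for all 0 ≤ s ≤ t, and let x : [0,∞) → [0,∞) be differentiable with x'(t) ≤ (-ν + a(t))·x(t) + c for all t > 0. Then x(t) ≤ e^{δ}·e^{-(1-ε)νt}·x(0) + (c·e^{δ})/((1-ε)·ν) for all t ≥ 0. -/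
/-!
Write `A t = ∫ r in 0..t, a r` and `μ = (1 - ε) ν`. The integrating factor `exp (ν t - A t)` removes
the linear term: the derivative of `x t * exp (ν t - A t)` is at most `c * exp (ν t - A t)`. For
`t ≤ T`, the integral bound on `[t, T]` gives `ν t - A t ≤ (δ + ε ν T - A T) + μ t`, so with
`K = exp (δ + ε ν T - A T)` the function `x t * exp (ν t - A t) - (c / μ) * K * exp (μ t)` is
antitone on `[0, T]`. Comparing its values at `0` and `T`, and using `A T ≤ δ + ε ν T`, gives the
claim at `T`.
-/

/-- Grönwall inequality with integrally-small perturbation: if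
`∫_s^t a ≤ δ + ε ν (t - s)` for all `0 ≤ s ≤ t` and `x' ≤ (-ν + a) x + c` for `t > 0`, then
`x t ≤ e^δ e^{-(1-ε)νt} x 0 + c e^δ / ((1-ε)ν)` for all `t ≥ 0`. -/
theorem gronwall_with_integrally_small_perturbation (ν ε δ c : ℝ)
    (hν : 0 < ν) (hε0 : 0 ≤ ε) (hε1 : ε < 1) (hδ : 0 ≤ δ) (hc : 0 ≤ c)
    (a : ℝ → ℝ) (ha_cont : ContinuousOn a (Set.Ici 0))
    (ha_nonneg : ∀ t ≥ (0:ℝ), 0 ≤ a t)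
    (ha_int : ∀ s t : ℝ, 0 ≤ s → s ≤ t → (∫ r in s..t, a r) ≤ δ + ε * ν * (t - s))
    (x x' : ℝ → ℝ) (hx_nonneg : ∀ t ≥ (0:ℝ), 0 ≤ x t)
    (hx_deriv : ∀ t ∈ Set.Ici (0:ℝ), HasDerivWithinAt x (x' t) (Set.Ici 0) t)
    (hineq : ∀ t > (0:ℝ), x' t ≤ (-ν + a t) * x t + c) :
    ∀ t ≥ (0:ℝ),
      x t ≤ Real.exp δ * Real.exp (-(1 - ε) * ν * t) * x 0 +
        c * Real.exp δ / ((1 - ε) * ν) := by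
  intro T hT
  have hμ : 0 < (1 - ε) * ν := mul_pos (by linarith) hν
  set μ := (1 - ε) * ν with hμdef
  -- `b` extends `a` continuously to all of `ℝ`, so that its primitive is differentiable everywhere.
  let b : ℝ → ℝ := fun t => a (max t 0)
  have hb : Continuous b :=
    ha_cont.comp_continuous (by fun_prop) (fun t => le_max_right t 0)
  have hbInt : ∀ s t : ℝ, 0 ≤ s → s ≤ t → (∫ r in s..t, b r) ≤ δ + ε * ν * (t - s) := by
    intro s t hs hst
    refine le_of_eq_of_le (intervalIntegral.integral_congr fun r hr => ?_) (ha_int s t hs hst)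
    rw [Set.uIcc_of_le hst] at hr
    simp only [b, max_eq_left (hs.trans hr.1)]
  let A : ℝ → ℝ := fun t => ∫ r in (0:ℝ)..t, b r
  have hA : ∀ t, HasDerivAt A (b t) t := fun t => hb.integral_hasStrictDerivAt 0 t |>.hasDerivAt
  have hA0 : A 0 = 0 := intervalIntegral.integral_same
  have hAT : A T ≤ δ + ε * ν * T := by simpa using hbInt 0 T le_rfl hT
  have hAtail : ∀ t, 0 ≤ t → t ≤ T → A T - A t ≤ δ + ε * ν * (T - t) := by
    intro t h0 h1
    have h := hbInt t T h0 h1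
    rwa [← intervalIntegral.integral_interval_sub_left (hb.intervalIntegrable 0 T)
      (hb.intervalIntegrable 0 t)] at h
  let K : ℝ := Real.exp (δ + ε * ν * T - A T)
  have hE : ∀ t, HasDerivAt (fun t => Real.exp (ν * t - A t))
      (Real.exp (ν * t - A t) * (ν - b t)) t := fun t => by
    simpa using (((hasDerivAt_id t).const_mul ν).sub (hA t)).exp
  have hF : ∀ t, HasDerivAt (fun t => c / μ * K * Real.exp (μ * t))
      (c * K * Real.exp (μ * t)) t := fun t => by
    have h := (((hasDerivAt_id t).const_mul μ).exp).const_mul (c / μ * K)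
    refine h.congr_deriv ?_
    simp only [id]
    field_simp
  have hφ : ∀ t, 0 ≤ t → HasDerivWithinAt
      (fun t => x t * Real.exp (ν * t - A t) - c / μ * K * Real.exp (μ * t))
      (x' t * Real.exp (ν * t - A t) + x t * (Real.exp (ν * t - A t) * (ν - b t))
        - c * K * Real.exp (μ * t)) (Set.Ici 0) t := fun t ht =>
    ((hx_deriv t ht).mul (hE t).hasDerivWithinAt).sub (hF t).hasDerivWithinAt
  have hanti : AntitoneOn
      (fun t => x t * Real.exp (ν * t - A t) - c / μ * K * Real.exp (μ * t)) (Set.Icc 0 T) := by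
    refine antitoneOn_of_hasDerivWithinAt_nonpos (convex_Icc 0 T)
      (fun t ht => ((hφ t ht.1).mono Set.Icc_subset_Ici_self).continuousWithinAt)
      (fun t ht => (hφ t (interior_subset ht).1).mono
        (interior_subset.trans Set.Icc_subset_Ici_self)) fun t ht => ?_
    rw [interior_Icc] at ht
    have hbt : b t = a t := by simp only [b, max_eq_left ht.1.le]
    have h1 := mul_le_mul_of_nonneg_right (hineq t ht.1) (Real.exp_pos (ν * t - A t)).le
    have h2 : Real.exp (ν * t - A t) ≤ K * Real.exp (μ * t) := by
      rw [← Real.exp_add]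
      refine Real.exp_le_exp.2 ?_
      rw [hμdef]
      linarith [hAtail t ht.1.le ht.2.le]
    have h3 := mul_le_mul_of_nonneg_left h2 hc
    rw [hbt]
    linarith
  have hcmp := hanti (Set.left_mem_Icc.2 hT) (Set.right_mem_Icc.2 hT) hT
  simp only [hA0, mul_zero, sub_zero, Real.exp_zero, mul_one] at hcmp
  have hcK : 0 ≤ c / μ * K := mul_nonneg (div_nonneg hc hμ.le) (Real.exp_pos _).le
  have hmain : x T * Real.exp (ν * T - A T) ≤ x 0 + c / μ * K * Real.exp (μ * T) := by linarith
  have hmul := mul_le_mul_of_nonneg_right hmain (Real.exp_pos (-(ν * T - A T))).le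
  have e1 : Real.exp (ν * T - A T) * Real.exp (-(ν * T - A T)) = 1 := by
    rw [← Real.exp_add, add_neg_cancel, Real.exp_zero]
  have e2 : K * Real.exp (μ * T) * Real.exp (-(ν * T - A T)) = Real.exp δ := by
    rw [← Real.exp_add, ← Real.exp_add, hμdef]
    ring_nf
  have e3 : Real.exp (-(ν * T - A T)) ≤ Real.exp δ * Real.exp (-(1 - ε) * ν * T) := by
    rw [← Real.exp_add]
    exact Real.exp_le_exp.2 (by linarith)
  calc x T = x T * Real.exp (ν * T - A T) * Real.exp (-(ν * T - A T)) := by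
        rw [mul_assoc, e1, mul_one]
    _ ≤ (x 0 + c / μ * K * Real.exp (μ * T)) * Real.exp (-(ν * T - A T)) := hmul
    _ = Real.exp (-(ν * T - A T)) * x 0
          + c / μ * (K * Real.exp (μ * T) * Real.exp (-(ν * T - A T))) := by ring
    _ = Real.exp (-(ν * T - A T)) * x 0 + c * Real.exp δ / μ := by rw [e2]; ring
    _ ≤ _ := by
        gcongr
        exact hx_nonneg 0 le_rfl
end
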